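/- arXiv:2402.07612 — 2 statements merged into one kernel-verified Lean document; each statement's English description precedes it below -/
import Mathlib

section
/- Let Ω ⊆ ℂ be open and connected, F holomorphic on Ω with F ≢ 0, and a ∈ Ω an equilibrium of order m ≥ 2. Then for every ε > 0 such that the closed ε-ball around a is contained in Ω, there exist nonconstant solutions γ₊ : [0,∞) → Ω and γ₋ : (−∞,0] → Ω of ẋ = F(x), both with image contained in { x : 0 < |x − a| < ε }, such that γ₊(t) → a as t → ∞ and γ₋(t) → a as t → −∞. In particular a is neither an attracting node/focus, nor a repelling node/focus, nor a center. -/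
open Set Filter Topology

/-- A solution of `ẋ = F(x)` on the set `s ⊆ ℝ`, staying in `Ω`. -/
def IsSolOn (F : ℂ → ℂ) (Ω : Set ℂ) (s : Set ℝ) (γ : ℝ → ℂ) : Prop :=
  ∀ t ∈ s, γ t ∈ Ω ∧ HasDerivWithinAt γ (F (γ t)) s t

/-!
Write `F z = (z - a) ^ (p + 1) * g z` with `g a ≠ 0` and `p = m - 1 ≥ 1`. Choosing `b` with
`p * g a * b ^ p = -1`, the substitution `z = a + b * u ^ (-1 / p)` turns `ż = F z` into
`u̇ = g z / g a`, and the right-hand side tends to `1` as `re u → ∞`. On a far right half-plane the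
speed therefore has real part at least `1 / 2`, so a solution starting there exists for all positive
times and satisfies `re u → ∞`, that is, `z → a`. Backward orbits of `F` are reversed forward orbits
of `-F`.
-/

open scoped NNReal

section GlobalExistence

variable {E : Type*} [NormedAddCommGroup E] [NormedSpace ℝ E] [CompleteSpace E] {v : E → E}
  {K L : ℝ≥0}

theorem exists_isIntegralCurveOn_Ioo_of_lipschitz_of_bounded (hv : LipschitzWith K v)
    (hL : ∀ x, ‖v x‖ ≤ L) (x₀ : E) (T : ℝ≥0) :
    ∃ γ : ℝ → E, γ 0 = x₀ ∧ IsIntegralCurveOn γ (fun _ ↦ v) (Ioo (-T) T) := by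
  have hT : (0 : ℝ) ∈ Icc (-(T : ℝ)) T := by simp
  have hpl : IsPicardLindelof (fun _ ↦ v) (⟨0, hT⟩ : Icc (-(T : ℝ)) T) x₀ (L * T) 0 L K :=
    .of_time_independent (fun x _ ↦ hL x) hv.lipschitzOnWith (by simp)
  obtain ⟨γ, hγ0, hγ⟩ := hpl.exists_eq_forall_mem_Icc_hasDerivWithinAt₀
  exact ⟨γ, hγ0, fun t ht ↦ (hγ t (Ioo_subset_Icc_self ht)).mono Ioo_subset_Icc_self⟩

theorem exists_isIntegralCurve_of_lipschitz_of_bounded (hv : LipschitzWith K v)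
    (hL : ∀ x, ‖v x‖ ≤ L) (x₀ : E) :
    ∃ γ : ℝ → E, γ 0 = x₀ ∧ IsIntegralCurve γ (fun _ ↦ v) := by
  choose γ hγ0 hγ using exists_isIntegralCurveOn_Ioo_of_lipschitz_of_bounded hv hL x₀
  have hderiv {T : ℝ≥0} {t : ℝ} (ht : t ∈ Ioo (-(T : ℝ)) T) : HasDerivAt (γ T) (v (γ T t)) t :=
    (hγ T t ht).hasDerivAt (Ioo_mem_nhds ht.1 ht.2)
  have hcompat {S T : ℝ≥0} (hST : S ≤ T) : EqOn (γ S) (γ T) (Ioo (-(S : ℝ)) S) := by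
    have hsub : Ioo (-(S : ℝ)) S ⊆ Ioo (-(T : ℝ)) T := Ioo_subset_Ioo (by simpa) (by simpa)
    intro t ht
    have hS : (0 : ℝ) < S := by linarith [ht.1, ht.2]
    exact ODE_solution_unique_of_mem_Ioo (v := fun _ ↦ v) (s := fun _ ↦ univ) (t₀ := 0)
      (fun _ _ ↦ hv.lipschitzOnWith) ⟨by simpa, hS⟩
      (fun r hr ↦ ⟨hderiv hr, trivial⟩) (fun r hr ↦ ⟨hderiv (hsub hr), trivial⟩)
      ((hγ0 S).trans (hγ0 T).symm) ht
  have hmem (t : ℝ) : t ∈ Ioo (-((‖t‖₊ + 1 : ℝ≥0) : ℝ)) (‖t‖₊ + 1 : ℝ≥0) := by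
    simpa only [NNReal.coe_add, coe_nnnorm, NNReal.coe_one, mem_Ioo, ← abs_lt, Real.norm_eq_abs]
      using lt_add_one |t|
  have hglue {T : ℝ≥0} {t : ℝ} (ht : t ∈ Ioo (-(T : ℝ)) T) : γ (‖t‖₊ + 1) t = γ T t := by
    rcases le_total (‖t‖₊ + 1) T with h | h
    · exact hcompat h (hmem t)
    · exact (hcompat h ht).symm
  refine ⟨fun t ↦ γ (‖t‖₊ + 1) t, hγ0 _, fun t ↦ (hderiv (hmem t)).congr_of_eventuallyEq ?_⟩
  filter_upwards [Ioo_mem_nhds (hmem t).1 (hmem t).2] with r hr using hglue hr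

end GlobalExistence

theorem lipschitzWith_add_max_sub_re (R : ℝ) :
    LipschitzWith 2 fun u : ℂ ↦ u + (max (R - u.re) 0 : ℝ) := by
  have hre : LipschitzWith 1 fun u : ℂ ↦ R - u.re :=
    .of_dist_le_mul fun x y ↦ by
      simpa [dist_eq_norm, ← Complex.sub_re, norm_sub_rev] using Complex.abs_re_le_norm (y - x)
  have hmax := Complex.isometry_ofReal.lipschitz.comp (hre.max_const 0)
  simpa [one_add_one_eq_two] using LipschitzWith.id.add hmax

theorem exists_isIntegralCurveOn_Ici_of_le_re {v : ℂ → ℂ} {K L : ℝ≥0} {R c : ℝ} (hc : 0 ≤ c)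
    (hlip : LipschitzOnWith K v {u | R ≤ u.re}) (hbound : ∀ u : ℂ, R ≤ u.re → ‖v u‖ ≤ L)
    (hre : ∀ u : ℂ, R ≤ u.re → c ≤ (v u).re) {u₀ : ℂ} (hu₀ : R ≤ u₀.re) :
    ∃ γ : ℝ → ℂ, γ 0 = u₀ ∧ IsIntegralCurveOn γ (fun _ ↦ v) (Ici 0) ∧
      ∀ t ≥ 0, u₀.re + c * t ≤ (γ t).re := by
  -- Precomposing with a retraction onto the half-plane makes the field Lipschitz on all of `ℂ`.
  set ρ : ℂ → ℂ := fun u ↦ u + (max (R - u.re) 0 : ℝ)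
  have hρ_mem (u : ℂ) : R ≤ (ρ u).re := by
    simpa [ρ, add_comm] using sub_le_iff_le_add.1 (le_max_left (R - u.re) 0)
  have hρ_eq {u : ℂ} (hu : R ≤ u.re) : ρ u = u := by simp [ρ, hu]
  have hlip' : LipschitzWith (K * 2) (v ∘ ρ) :=
    lipschitzOnWith_univ.1 <|
      hlip.comp (lipschitzWith_add_max_sub_re R).lipschitzOnWith fun u _ ↦ hρ_mem u
  obtain ⟨γ, hγ0, hγ⟩ :=
    exists_isIntegralCurve_of_lipschitz_of_bounded hlip' (fun u ↦ hbound _ (hρ_mem u)) u₀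
  have hγre (t : ℝ) : HasDerivAt (fun t ↦ (γ t).re) (v (ρ (γ t))).re t :=
    Complex.reCLM.hasFDerivAt.comp_hasDerivAt t (hγ t)
  have hgrowth (t : ℝ) (ht : 0 ≤ t) : u₀.re + c * t ≤ (γ t).re := by
    have := mul_sub_le_image_sub_of_le_deriv (fun t ↦ (hγre t).differentiableAt)
      (fun t ↦ (hre _ (hρ_mem (γ t))).trans_eq (hγre t).deriv.symm) ht
    rw [hγ0] at this
    linarith
  refine ⟨γ, hγ0, fun t ht ↦ ?_, hgrowth⟩
  have hR : R ≤ (γ t).re := by linarith [hgrowth t ht, mul_nonneg hc ht]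
  simpa only [Function.comp_apply, hρ_eq hR] using (hγ t).hasDerivWithinAt (s := Ici 0)

/-- The inverse, given by the principal branch of the root, of the coordinate
`u = (b / (z - a)) ^ p` with pole at `a`. If `p * c * b ^ p = -1`, it carries the constant field `1`
to `c * (z - a) ^ (p + 1)`. -/
noncomputable def rootChart (a b : ℂ) (p : ℕ) (u : ℂ) : ℂ := a + b * u ^ (-(p : ℂ)⁻¹)

namespace rootChart

variable {a b c u : ℂ} {p : ℕ}

theorem sub_center_pow (hp : p ≠ 0) : (rootChart a b p u - a) ^ p = b ^ p / u := by
  have hp' : (p : ℂ) ≠ 0 := Nat.cast_ne_zero.2 hp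
  rw [rootChart, add_sub_cancel_left, mul_pow, ← Complex.cpow_nat_mul, mul_neg,
    mul_inv_cancel₀ hp', Complex.cpow_neg_one, div_eq_mul_inv]

theorem norm_sub_center : ‖rootChart a b p u - a‖ = ‖b‖ * ‖u‖ ^ (-(p : ℝ)⁻¹) := by
  rw [rootChart, add_sub_cancel_left, norm_mul, ← Complex.norm_cpow_real]
  push_cast
  rfl

theorem norm_sub_center_le (hu : 1 ≤ ‖u‖) : ‖rootChart a b p u - a‖ ≤ ‖b‖ := by
  rw [norm_sub_center]
  exact mul_le_of_le_one_right (norm_nonneg b)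
    (Real.rpow_le_one_of_one_le_of_nonpos hu (by simp))

theorem ne_center (hb : b ≠ 0) (hu : u ≠ 0) : rootChart a b p u ≠ a := by
  simp [rootChart, hb, hu, Complex.cpow_eq_zero_iff]

theorem tendsto_cobounded (hp : p ≠ 0) :
    Tendsto (rootChart a b p) (Bornology.cobounded ℂ) (𝓝 a) := by
  rw [tendsto_iff_norm_sub_tendsto_zero]
  simp only [norm_sub_center]
  have hq : 0 < (p : ℝ)⁻¹ := by positivity
  simpa using ((tendsto_rpow_neg_atTop hq).comp tendsto_norm_cobounded_atTop).const_mul ‖b‖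

theorem hasDerivAt (hb : p * c * b ^ p = -1) (hu : u ∈ Complex.slitPlane) :
    HasDerivAt (rootChart a b p) (c * (rootChart a b p u - a) ^ (p + 1)) u := by
  have hp : p ≠ 0 := by rintro rfl; simp at hb
  have hp' : (p : ℂ) ≠ 0 := Nat.cast_ne_zero.2 hp
  have hu0 : u ≠ 0 := Complex.slitPlane_ne_zero hu
  have hderiv := ((Complex.hasStrictDerivAt_cpow_const (c := -(p : ℂ)⁻¹) hu).hasDerivAt.const_mul
    b).const_add a
  refine hderiv.congr_deriv ?_
  rw [pow_succ, sub_center_pow hp, rootChart, add_sub_cancel_left, Complex.cpow_sub _ _ hu0,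
    Complex.cpow_one]
  field_simp
  linear_combination -(b * u ^ (-(1 / (p : ℂ)))) * hb

theorem lipschitzOnWith (hb : p * c * b ^ p = -1) :
    LipschitzOnWith (‖c‖₊ * ‖b‖₊ ^ (p + 1)) (rootChart a b p) {u | 1 ≤ u.re} := by
  refine (convex_halfSpace_re_ge 1).lipschitzOnWith_of_nnnorm_hasDerivWithin_le
    (fun u hu ↦ (hasDerivAt hb (Or.inl (zero_lt_one.trans_le hu))).hasDerivWithinAt) fun u hu ↦ ?_
  rw [nnnorm_mul, nnnorm_pow]
  gcongr
  exact norm_sub_center_le (le_trans hu (Complex.re_le_norm u))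

end rootChart

theorem exists_mul_pow_eq_neg_one {k : Type*} [Field k] [IsAlgClosed k] {d : k} (hd : d ≠ 0)
    {p : ℕ} (hp : p ≠ 0) : ∃ b : k, d * b ^ p = -1 := by
  obtain ⟨b, hb⟩ := IsAlgClosed.exists_pow_nat_eq (-d⁻¹) (Nat.pos_of_ne_zero hp)
  exact ⟨b, by rw [hb, mul_neg, mul_inv_cancel₀ hd]⟩

theorem tendsto_cobounded_of_tendsto_re {α : Type*} {l : Filter α} {u : α → ℂ}
    (h : Tendsto (fun x ↦ (u x).re) l atTop) : Tendsto u l (Bornology.cobounded ℂ) :=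
  tendsto_norm_atTop_iff_cobounded.1 <| tendsto_atTop_mono (fun x ↦ Complex.re_le_norm (u x)) h

theorem eventually_forall_le_re_of_cobounded {P : ℂ → Prop}
    (h : ∀ᶠ u in Bornology.cobounded ℂ, P u) :
    ∀ᶠ R : ℝ in atTop, ∀ u : ℂ, R ≤ u.re → P u := by
  obtain ⟨r, -, hr⟩ := hasBasis_cobounded_norm.eventually_iff.1 h
  filter_upwards [eventually_ge_atTop r] with R hrR u hu
  exact hr (hrR.trans (hu.trans (Complex.re_le_norm u)))

theorem norm_le_one_add_of_norm_sub_one_le {A : Type*} [SeminormedRing A] [NormOneClass A] {w : A}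
    {r : ℝ} (h : ‖w - 1‖ ≤ r) : ‖w‖ ≤ 1 + r := by
  calc ‖w‖ ≤ ‖(1 : A)‖ + ‖w - 1‖ := norm_le_norm_add_norm_sub' w 1
    _ ≤ 1 + r := by rw [norm_one]; gcongr

theorem one_sub_le_re_of_norm_sub_one_le {w : ℂ} {r : ℝ} (h : ‖w - 1‖ ≤ r) : 1 - r ≤ w.re := by
  have := neg_le_of_abs_le ((Complex.abs_re_le_norm (w - 1)).trans h)
  rw [Complex.sub_re, Complex.one_re] at this
  linarith

section ForwardOrbit

variable {F g : ℂ → ℂ} {a b : ℂ} {p : ℕ} {ε : ℝ}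

theorem eventually_exists_isIntegralCurveOn_rootChart {K : ℝ≥0} {s : Set ℂ} (hs : s ∈ 𝓝 a)
    (hg : LipschitzOnWith K g s) (hb : p * g a * b ^ p = -1) :
    ∀ᶠ R : ℝ in atTop, ∃ u : ℝ → ℂ,
      IsIntegralCurveOn u (fun _ w ↦ g (rootChart a b p w) / g a) (Ici 0) ∧
      (∀ t ≥ 0, R ≤ (u t).re) ∧ Tendsto (fun t ↦ (u t).re) atTop atTop := by
  have hp : p ≠ 0 := by rintro rfl; simp at hb
  have hga : g a ≠ 0 := by rintro h; simp [h] at hb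
  have hclose : ∀ᶠ z in 𝓝 a, ‖g z / g a - 1‖ ≤ 1 / 2 := by
    have hcont : ContinuousAt (fun z ↦ ‖g z / g a - 1‖) a :=
      ((hg.continuousOn.continuousAt hs).div_const _ |>.sub_const 1).norm
    exact (hcont.eventually_lt_const (by simp [hga])).mono fun _ ↦ le_of_lt
  filter_upwards [eventually_ge_atTop 1, eventually_forall_le_re_of_cobounded <|
    (rootChart.tendsto_cobounded hp).eventually (hclose.and hs)] with R hR1 hR
  have hlip := (lipschitzWith_smul (g a)⁻¹).comp_lipschitzOnWith <|
    hg.comp ((rootChart.lipschitzOnWith hb).mono fun u hu ↦ hR1.trans hu) fun u hu ↦ (hR u hu).2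
  simp only [Function.comp_def, smul_eq_mul, inv_mul_eq_div] at hlip
  have hbound (u : ℂ) (hu : R ≤ u.re) : ‖g (rootChart a b p u) / g a‖ ≤ (2 : ℝ≥0) := by
    rw [NNReal.coe_ofNat]
    linarith [norm_le_one_add_of_norm_sub_one_le (hR u hu).1]
  have hre (u : ℂ) (hu : R ≤ u.re) : 1 / 2 ≤ (g (rootChart a b p u) / g a).re := by
    linarith [one_sub_le_re_of_norm_sub_one_le (hR u hu).1]
  obtain ⟨u, -, hu, hgrowth⟩ := exists_isIntegralCurveOn_Ici_of_le_re (by norm_num) hlip hbound hre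
    (Complex.ofReal_re R).ge
  rw [Complex.ofReal_re] at hgrowth
  have hlin : Tendsto (fun t : ℝ ↦ R + 1 / 2 * t) atTop atTop :=
    tendsto_atTop_add_const_left _ _ (tendsto_id.const_mul_atTop (by norm_num))
  exact ⟨u, hu, fun t ht ↦ by linarith [hgrowth t ht],
    tendsto_atTop_mono' _ ((eventually_ge_atTop 0).mono hgrowth) hlin⟩

theorem exists_isSolOn_Ici_tendsto (hF : AnalyticAt ℂ F a) (hp : p ≠ 0)
    (hord : analyticOrderAt F a = (p + 1 : ℕ)) (hε : 0 < ε) :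
    ∃ γ : ℝ → ℂ, IsSolOn F (Metric.ball a ε \ {a}) (Ici 0) γ ∧ Tendsto γ atTop (𝓝 a) := by
  obtain ⟨g, hg, hga, hFg⟩ := hF.analyticOrderAt_eq_natCast.1 hord
  obtain ⟨b, hb⟩ := exists_mul_pow_eq_neg_one (mul_ne_zero (Nat.cast_ne_zero.2 hp) hga) hp
  have hb0 : b ≠ 0 := by rintro rfl; simp [hp] at hb
  obtain ⟨K, s, hs, hlip⟩ := (hg.contDiffAt (n := 1)).exists_lipschitzOnWith
  obtain ⟨R, ⟨u, hu, huR, hure⟩, hR0, hR⟩ :=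
    ((eventually_exists_isIntegralCurveOn_rootChart hs hlip hb).and <|
      (eventually_gt_atTop 0).and <| eventually_forall_le_re_of_cobounded <|
        (rootChart.tendsto_cobounded hp).eventually (hFg.and (Metric.ball_mem_nhds a hε))).exists
  refine ⟨fun t ↦ rootChart a b p (u t), fun t ht ↦ ?_,
    (rootChart.tendsto_cobounded hp).comp (tendsto_cobounded_of_tendsto_re hure)⟩
  obtain ⟨hFt, hball⟩ := hR _ (huR t ht)
  have hslit : u t ∈ Complex.slitPlane := Or.inl (hR0.trans_le (huR t ht))
  refine ⟨⟨hball, rootChart.ne_center hb0 (Complex.slitPlane_ne_zero hslit)⟩, ?_⟩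
  refine ((rootChart.hasDerivAt hb hslit).comp_hasDerivWithinAt t (hu t ht)).congr_deriv ?_
  rw [hFt, smul_eq_mul]
  field_simp

end ForwardOrbit

theorem exists_ne_of_tendsto_of_forall_ne {α X : Type*} [TopologicalSpace X] [T1Space X]
    {l : Filter α} [l.NeBot] {s : Set α} {f : α → X} {a : X} (hs : s ∈ l)
    (hne : ∀ t ∈ s, f t ≠ a) (hf : Tendsto f l (𝓝 a)) : ∃ t ∈ s, ∃ r ∈ s, f t ≠ f r := by
  by_contra! hconst
  obtain ⟨t, ht⟩ := l.nonempty_of_mem hs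
  have hlim : Tendsto (fun _ ↦ f t) l (𝓝 a) :=
    hf.congr' (mem_of_superset hs fun r hr ↦ hconst r hr t ht)
  exact hne t ht (tendsto_const_nhds_iff.1 hlim)

namespace IsSolOn

variable {F : ℂ → ℂ} {Ω Ω' : Set ℂ} {s : Set ℝ} {γ : ℝ → ℂ}

theorem mono (h : IsSolOn F Ω s γ) (hΩ : Ω ⊆ Ω') : IsSolOn F Ω' s γ :=
  fun t ht ↦ ⟨hΩ (h t ht).1, (h t ht).2⟩

theorem comp_neg (h : IsSolOn (-F) Ω s γ) : IsSolOn F Ω (-s) fun t ↦ γ (-t) := fun t ht ↦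
  ⟨(h _ ht).1, ((h _ ht).2.scomp t (hasDerivWithinAt_neg t (-s)) fun _ hr ↦ hr).congr_deriv
    (by simp)⟩

end IsSolOn

theorem stmt_10_general {F : ℂ → ℂ} {a : ℂ} (hF : AnalyticAt ℂ F a) {m : ℕ} (hm : 2 ≤ m)
    (hlow : ∀ k < m, iteratedDeriv k F a = 0) (hord : iteratedDeriv m F a ≠ 0)
    {Ω : Set ℂ} {ε : ℝ} (hε : 0 < ε) (hball : Metric.ball a ε ⊆ Ω) :
    (∃ γ : ℝ → ℂ, IsSolOn F Ω (Ici 0) γ ∧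
      (∀ t ∈ Ici (0 : ℝ), γ t ≠ a ∧ dist (γ t) a < ε) ∧
      (∃ t ∈ Ici (0 : ℝ), ∃ s ∈ Ici (0 : ℝ), γ t ≠ γ s) ∧
      Tendsto γ atTop (nhds a)) ∧
    (∃ γ : ℝ → ℂ, IsSolOn F Ω (Iic 0) γ ∧
      (∀ t ∈ Iic (0 : ℝ), γ t ≠ a ∧ dist (γ t) a < ε) ∧
      (∃ t ∈ Iic (0 : ℝ), ∃ s ∈ Iic (0 : ℝ), γ t ≠ γ s) ∧
      Tendsto γ atBot (nhds a)) := by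
  obtain ⟨p, rfl⟩ : ∃ p, m = p + 1 := ⟨m - 1, by omega⟩
  have hp : p ≠ 0 := by omega
  have horder : analyticOrderAt F a = (p + 1 : ℕ) :=
    (analyticOrderAt_eq_nat_iff_iteratedDeriv_eq_zero hF).2 ⟨hlow, hord⟩
  have hpunctured {s : Set ℝ} {l : Filter ℝ} [l.NeBot] (hs : s ∈ l) {γ : ℝ → ℂ}
      (hγ : IsSolOn F (Metric.ball a ε \ {a}) s γ) (hlim : Tendsto γ l (𝓝 a)) :
      IsSolOn F Ω s γ ∧ (∀ t ∈ s, γ t ≠ a ∧ dist (γ t) a < ε) ∧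
        (∃ t ∈ s, ∃ r ∈ s, γ t ≠ γ r) ∧ Tendsto γ l (𝓝 a) :=
    ⟨hγ.mono (sdiff_subset.trans hball), fun t ht ↦ (hγ t ht).1.symm,
      exists_ne_of_tendsto_of_forall_ne hs (fun t ht ↦ (hγ t ht).1.2) hlim, hlim⟩
  obtain ⟨γ, hγ, hγlim⟩ := exists_isSolOn_Ici_tendsto hF hp horder hε
  obtain ⟨η, hη, hηlim⟩ :=
    exists_isSolOn_Ici_tendsto hF.neg hp (analyticOrderAt_neg.trans horder) hε
  have hη_neg := hη.comp_neg
  rw [neg_Ici, neg_zero] at hη_neg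
  exact ⟨⟨γ, hpunctured (Ici_mem_atTop 0) hγ hγlim⟩,
    ⟨_, hpunctured (Iic_mem_atBot 0) hη_neg (hηlim.comp tendsto_neg_atBot_atTop)⟩⟩

/-- near an equilibrium `a` of order `m ≥ 2` of a holomorphic flow, every
closed `ε`-ball inside `Ω` contains a nonconstant forward orbit tending to `a` and a
nonconstant backward orbit tending to `a`, both staying in the punctured ball. -/
theorem stmt_10 (Ω : Set ℂ) (hΩ : IsOpen Ω) (hconn : IsConnected Ω)
    (F : ℂ → ℂ) (hF : DifferentiableOn ℂ F Ω) (hF0 : ∃ z ∈ Ω, F z ≠ 0)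
    (a : ℂ) (ha : a ∈ Ω) (m : ℕ) (hm : 2 ≤ m)
    (hlow : ∀ k < m, iteratedDeriv k F a = 0) (hord : iteratedDeriv m F a ≠ 0) :
    ∀ ε > 0, Metric.closedBall a ε ⊆ Ω →
      (∃ γ : ℝ → ℂ, IsSolOn F Ω (Ici 0) γ ∧
        (∀ t ∈ Ici (0 : ℝ), γ t ≠ a ∧ dist (γ t) a < ε) ∧
        (∃ t ∈ Ici (0 : ℝ), ∃ s ∈ Ici (0 : ℝ), γ t ≠ γ s) ∧
        Tendsto γ atTop (nhds a)) ∧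
      (∃ γ : ℝ → ℂ, IsSolOn F Ω (Iic 0) γ ∧
        (∀ t ∈ Iic (0 : ℝ), γ t ≠ a ∧ dist (γ t) a < ε) ∧
        (∃ t ∈ Iic (0 : ℝ), ∃ s ∈ Iic (0 : ℝ), γ t ≠ γ s) ∧
        Tendsto γ atBot (nhds a)) := by
  intro ε hε hball
  exact stmt_10_general (hF.analyticAt (hΩ.mem_nhds ha)) hm hlow hord hε
    (Metric.ball_subset_closedBall.trans hball)
end

section
/- Let Ω ⊆ ℂ be open and connected, F holomorphic on Ω with F ≢ 0, and a ∈ Ω an equilibrium of order m ≥ 2. Let ε > 0 be such that the closed ε-ball around a is contained in Ω and contains no zero of F other than a. Then there exists a nonconstant solution γ : ℝ → Ω of ẋ = F(x) with image contained in { x : 0 < |x − a| < ε } such that γ(t) → a as t → ∞ and γ(t) → a as t → −∞; that is, every such neighborhood of a contains a homoclinic orbit of a. -/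
open Set Filter Topology

/-!
Write `F(z) = (z - a)^(n + 1) g(z)` with `g(a) ≠ 0` and `n = m - 1 ≥ 1`. In the coordinate
`v = (b / (z - a))^n` the equation `ẋ = F(x)` becomes `v̇ = -n b^n g(z)`, a holomorphic field near
`∞` in the slit plane; choosing `b` with `-n b^n g(a) = i` makes it tend to `i` as `v → ∞`. A
solution starting at a large positive real number then stays in a double cone around a vertical
line. This cone avoids the branch cut and a large disc, so the solution exists for all time and
escapes to `∞` in both time directions, where `v = ∞` corresponds to `z = a`.
-/

open Bornology Metric
open scoped Manifold

section VectorField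

variable {E : Type*} [NormedAddCommGroup E] [NormedSpace ℝ E]

lemma norm_sub_sub_smul_le_of_norm_deriv_sub_le {γ γ' : ℝ → E} {c : E} {θ : ℝ}
    (hγ : ∀ t, HasDerivAt γ (γ' t) t) (hγ' : ∀ t, ‖γ' t - c‖ ≤ θ) (t : ℝ) :
    ‖γ t - γ 0 - t • c‖ ≤ θ * |t| := by
  have hderiv : ∀ s, HasDerivAt (fun s : ℝ ↦ γ s - s • c) (γ' s - c) s := fun s ↦ by
    simpa only [one_smul, id_eq] using (hγ s).fun_sub ((hasDerivAt_id s).smul_const c)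
  simpa [sub_right_comm] using convex_univ.norm_image_sub_le_of_norm_hasDerivWithin_le
    (fun s _ ↦ (hderiv s).hasDerivWithinAt) (fun s _ ↦ hγ' s) (mem_univ 0) (mem_univ t)

lemma tendsto_cobounded_of_norm_sub_sub_smul_le {γ : ℝ → E} {x c : E} {θ : ℝ} (hθ : θ < ‖c‖)
    (hγ : ∀ t, ‖γ t - x - t • c‖ ≤ θ * |t|) : Tendsto γ (cobounded ℝ) (cobounded E) := by
  have hlower : ∀ t, (‖c‖ - θ) * ‖t‖ - ‖x‖ ≤ ‖γ t‖ := fun t ↦ by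
    have hbound := hγ t
    have htri : ‖t • c‖ ≤ ‖γ t‖ + ‖x‖ + ‖γ t - x - t • c‖ := by
      simpa using (norm_sub_le (γ t - x) (γ t - x - t • c)).trans
        (add_le_add_left (norm_sub_le (γ t) x) _)
    rw [norm_smul] at htri
    rw [← Real.norm_eq_abs] at hbound
    linarith
  exact tendsto_norm_atTop_iff_cobounded.mp <| tendsto_atTop_mono hlower <|
    tendsto_atTop_add_const_right _ _ <|
      tendsto_norm_cobounded_atTop.const_mul_atTop (sub_pos.mpr hθ)

variable [FiniteDimensional ℝ E]

lemma exists_forall_hasDerivAt_of_contDiff_of_norm_le {f : E → E} (hf : ContDiff ℝ 1 f) {C : ℝ}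
    (hC : ∀ x, ‖f x‖ ≤ C) (x : E) : ∃ γ : ℝ → E, γ 0 = x ∧ ∀ t, HasDerivAt γ (f (γ t)) t := by
  have : ProperSpace E := FiniteDimensional.proper ℝ E
  lift C to NNReal using (norm_nonneg _).trans (hC x)
  have hunit : ∀ y : E, ∃ γ : ℝ → E, γ 0 = y ∧
      IsMIntegralCurveOn (I := 𝓘(ℝ, E)) γ f (Ioo (-1) 1) := fun y ↦ by
    obtain ⟨K, hK⟩ := (hf.locallyLipschitz.locallyLipschitzOn
      (s := closedBall y C)).exists_lipschitzOnWith_of_compact (isCompact_closedBall _ _)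
    have hpl : IsPicardLindelof (fun _ ↦ f) (tmin := -1) (tmax := 1) ⟨0, by simp⟩ y C 0 C K :=
      .of_time_independent (fun z _ ↦ hC z) hK (by simp)
    obtain ⟨γ, hγ0, hγ⟩ := hpl.exists_eq_forall_mem_Icc_hasDerivWithinAt₀
    refine ⟨γ, hγ0, fun t ht ↦ ?_⟩
    have hderiv := (hγ t (Ioo_subset_Icc_self ht)).mono Ioo_subset_Icc_self
    exact hderiv.hasFDerivWithinAt.hasMFDerivWithinAt
  obtain ⟨γ, hγ0, hγ⟩ := exists_isMIntegralCurve_of_isMIntegralCurveOn (I := 𝓘(ℝ, E))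
    (contMDiff_vectorSpace_iff_contDiff.mpr hf) one_pos hunit x
  exact ⟨γ, hγ0, fun t ↦ hasDerivAt_iff_hasFDerivAt.mpr (hγ t).hasFDerivAt⟩

lemma exists_contDiff_eqOn_forall_mem_of_convex {G : Type*} [NormedAddCommGroup G]
    [NormedSpace ℝ G] {n : ℕ∞} {f : E → G} {U K : Set E} {S : Set G} (hf : ContDiffOn ℝ n f U)
    (hU : IsOpen U) (hK : IsClosed K) (hKU : K ⊆ U) (hS : Convex ℝ S) (hne : S.Nonempty)
    (hfS : MapsTo f U S) : ∃ g : E → G, ContDiff ℝ n g ∧ EqOn g f K ∧ ∀ x, g x ∈ S := by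
  obtain ⟨c, hc⟩ := hne
  obtain ⟨φ, hφ0, hφ1, hφ⟩ := exists_contMDiffMap_zero_one_nhds_of_isClosed (n := n) 𝓘(ℝ, E)
    hU.isClosed_compl hK (disjoint_compl_left_iff_subset.mpr hKU)
  have hφU : ∀ x ∉ U, ∀ᶠ y in 𝓝 x, φ y = 0 := fun x hx ↦ hφ0.filter_mono (nhds_le_nhdsSet hx)
  refine ⟨fun x ↦ c + φ x • (f x - c), contDiff_iff_contDiffAt.mpr fun x ↦ ?_, fun x hx ↦ ?_,
    fun x ↦ ?_⟩
  · by_cases hx : x ∈ U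
    · exact contDiffAt_const.add (φ.contMDiff.contDiff.contDiffAt.smul
        ((hf.contDiffAt (hU.mem_nhds hx)).sub contDiffAt_const))
    · refine (contDiffAt_const (c := c)).congr_of_eventuallyEq ?_
      filter_upwards [hφU x hx] with y hy
      rw [hy, zero_smul, add_zero]
  · have hx1 : φ x = 1 := (hφ1.filter_mono (nhds_le_nhdsSet hx)).self_of_nhds
    simp [hx1]
  · by_cases hx : x ∈ U
    · exact hS.add_smul_sub_mem hc (hfS hx) (hφ x)
    · simpa [(hφU x hx).self_of_nhds] using hc

-- Off `K` the field is interpolated with the constant `c` to make it globally defined. The solution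
-- of the modified equation never leaves the cone around the line `x + ℝ c`, where nothing changed.
lemma exists_forall_hasDerivAt_of_cone_subset {f : E → E} {U K : Set E} {x c : E} {θ : ℝ}
    (hU : IsOpen U) (hf : ContDiffOn ℝ 1 f U) (hfc : ∀ v ∈ U, ‖f v - c‖ ≤ θ)
    (hK : IsClosed K) (hKU : K ⊆ U) (hcone : ∀ t : ℝ, ∀ v, ‖v - x - t • c‖ ≤ θ * |t| → v ∈ K) :
    ∃ γ : ℝ → E, ∀ t, HasDerivAt γ (f (γ t)) t ∧ ‖γ t - x - t • c‖ ≤ θ * |t| := by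
  have hθ : 0 ≤ θ := (norm_nonneg _).trans (hfc x (hKU (hcone 0 x (by simp))))
  obtain ⟨g, hg, hgf, hgc⟩ := exists_contDiff_eqOn_forall_mem_of_convex (n := 1) hf hU hK hKU
    (convex_closedBall c θ) ⟨c, mem_closedBall_self hθ⟩ fun v hv ↦
      mem_closedBall_iff_norm.mpr (hfc v hv)
  simp only [mem_closedBall_iff_norm] at hgc
  obtain ⟨γ, rfl, hγ⟩ := exists_forall_hasDerivAt_of_contDiff_of_norm_le hg
    (fun v ↦ norm_le_norm_add_const_of_dist_le (dist_eq_norm (g v) c ▸ hgc v)) x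
  have hdrift := norm_sub_sub_smul_le_of_norm_deriv_sub_le hγ fun t ↦ hgc (γ t)
  exact ⟨γ, fun t ↦ ⟨hgf (hcone t _ (hdrift t)) ▸ hγ t, hdrift t⟩⟩

end VectorField

lemma exists_isClosed_subset_slitPlane_forall_cone_mem (R : ℝ) :
    ∃ K : Set ℂ, IsClosed K ∧ K ⊆ {v | R < ‖v‖} ∩ Complex.slitPlane ∧ ∃ x : ℂ, ∀ t : ℝ, ∀ v,
      ‖v - x - t • Complex.I‖ ≤ 1 / 2 * |t| → v ∈ K := by
  refine ⟨{v | |v.re - (2 * |R| + 1)| ≤ |v.im|}, ?_, fun v hv ↦ ⟨?_, ?_⟩,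
    (2 * |R| + 1 : ℝ), fun t v hv ↦ ?_⟩
  · exact isClosed_le (by fun_prop) (by fun_prop)
  · rw [mem_ofPred_eq] at hv ⊢
    have hre := abs_le.mp hv
    by_contra! hle
    linarith [le_abs_self R, Complex.re_le_norm v, Complex.abs_im_le_norm v]
  · rw [Complex.mem_slitPlane_iff, or_iff_not_imp_right, not_not]
    intro him
    rw [mem_ofPred_eq, him, abs_zero, abs_nonpos_iff] at hv
    linarith [abs_nonneg R]
  · have hre := (Complex.abs_re_le_norm _).trans hv
    have him := (Complex.abs_im_le_norm _).trans hv
    simp only [Complex.sub_re, Complex.sub_im, Complex.ofReal_re, Complex.ofReal_im,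
      Complex.smul_re, Complex.smul_im, Complex.I_re, Complex.I_im, smul_eq_mul, mul_zero,
      mul_one, sub_zero] at hre him
    rw [mem_ofPred_eq]
    linarith [abs_sub_abs_le_abs_sub t v.im, abs_sub_comm t v.im]

lemma exists_forall_hasDerivAt_of_tendsto_I {H : ℂ → ℂ} {U : Set ℂ}
    (hd : ∀ᶠ v in cobounded ℂ ⊓ 𝓟 Complex.slitPlane, DifferentiableAt ℂ H v)
    (hH : Tendsto H (cobounded ℂ ⊓ 𝓟 Complex.slitPlane) (𝓝 Complex.I))
    (hU : U ∈ cobounded ℂ ⊓ 𝓟 Complex.slitPlane) :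
    ∃ γ : ℝ → ℂ, (∀ t, HasDerivAt γ (H (γ t)) t) ∧ (∀ t, γ t ∈ U) ∧
      Tendsto γ (cobounded ℝ) (cobounded ℂ) := by
  have hnear : ∀ᶠ v in cobounded ℂ ⊓ 𝓟 Complex.slitPlane,
      DifferentiableAt ℂ H v ∧ ‖H v - Complex.I‖ ≤ 1 / 2 ∧ v ∈ U := by
    filter_upwards [hd, hH.eventually (closedBall_mem_nhds _ one_half_pos), hU] with v h₁ h₂ h₃
    exact ⟨h₁, mem_closedBall_iff_norm.mp h₂, h₃⟩
  obtain ⟨R, -, hR⟩ := (hasBasis_cobounded_norm.inf_principal _).eventually_iff.mp hnear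
  obtain ⟨K, hK, hKV, x, hcone⟩ := exists_isClosed_subset_slitPlane_forall_cone_mem R
  set V := {v : ℂ | R < ‖v‖} ∩ Complex.slitPlane
  have hV : IsOpen V := (isOpen_lt continuous_const continuous_norm).inter Complex.isOpen_slitPlane
  have hVR : ∀ v ∈ V, DifferentiableAt ℂ H v ∧ ‖H v - Complex.I‖ ≤ 1 / 2 ∧ v ∈ U :=
    fun v hv ↦ hR ⟨mem_ofPred.mpr (le_of_lt hv.1), hv.2⟩
  have hHV : ContDiffOn ℝ 1 H V :=
    (DifferentiableOn.contDiffOn (fun v hv ↦ (hVR v hv).1.differentiableWithinAt)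
      hV).restrict_scalars ℝ
  obtain ⟨γ, hγ⟩ := exists_forall_hasDerivAt_of_cone_subset hV hHV (fun v hv ↦ (hVR v hv).2.1)
    hK hKV hcone
  exact ⟨γ, fun t ↦ (hγ t).1, fun t ↦ (hVR _ (hKV (hcone t _ (hγ t).2))).2.2,
    tendsto_cobounded_of_norm_sub_sub_smul_le (by norm_num) fun t ↦ (hγ t).2⟩

/-- The branch `v ↦ a + b v^(-1/n)`, for `n ≥ 1` and with the principal root, of the inverse of
`z ↦ (b / (z - a)) ^ n`. It parametrizes a petal at `a` by a neighbourhood of `∞` in the slit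
plane. -/
noncomputable def petalParam (a b : ℂ) (n : ℕ) (v : ℂ) : ℂ :=
  a + b * v ^ (-(n : ℂ)⁻¹)

namespace petalParam

variable {a b v : ℂ} {n : ℕ}

lemma sub_center_pow (hn : n ≠ 0) : (petalParam a b n v - a) ^ n = b ^ n / v := by
  rw [petalParam, add_sub_cancel_left, mul_pow, Complex.cpow_neg, inv_pow,
    Complex.cpow_nat_inv_pow v hn, div_eq_mul_inv]

lemma ne_center (hb : b ≠ 0) (hv : v ≠ 0) : petalParam a b n v ≠ a := by
  simp [petalParam, hb, hv, Complex.cpow_eq_zero_iff]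

lemma hasDerivAt (hv : v ∈ Complex.slitPlane) :
    HasDerivAt (petalParam a b n) (-(petalParam a b n v - a) / (n * v)) v := by
  have hv0 := Complex.slitPlane_ne_zero hv
  refine ((((hasDerivAt_id v).cpow_const (c := -(n : ℂ)⁻¹) hv).const_mul b).const_add
    a).congr_deriv ?_
  simp only [id_eq, petalParam, add_sub_cancel_left, Complex.cpow_sub _ _ hv0, Complex.cpow_one]
  field_simp

lemma tendsto_cobounded (hn : n ≠ 0) : Tendsto (petalParam a b n) (cobounded ℂ) (𝓝 a) := by
  have hpow : Tendsto (fun v ↦ (petalParam a b n v - a) ^ n) (cobounded ℂ) (𝓝 0) := by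
    simpa only [sub_center_pow hn, div_eq_mul_inv, mul_zero] using
      tendsto_inv₀_cobounded.const_mul (b ^ n)
  rw [← tendsto_sub_nhds_zero_iff, tendsto_zero_iff_norm_tendsto_zero]
  have hroot := (tendsto_zero_iff_norm_tendsto_zero.mp hpow).rpow_const (p := (n : ℝ)⁻¹) (by simp)
  simpa [norm_pow, Real.pow_rpow_inv_natCast, hn] using hroot

lemma hasDerivAt_comp {g : ℂ → ℂ} {γ : ℝ → ℂ} {t : ℝ} (hn : n ≠ 0)
    (hγ : γ t ∈ Complex.slitPlane)
    (hderiv : HasDerivAt γ (-n * b ^ n * g (petalParam a b n (γ t))) t) :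
    HasDerivAt (petalParam a b n ∘ γ)
      ((petalParam a b n (γ t) - a) ^ (n + 1) * g (petalParam a b n (γ t))) t := by
  have hγ0 := Complex.slitPlane_ne_zero hγ
  refine ((hasDerivAt hγ).scomp t hderiv).congr_deriv ?_
  rw [pow_succ, sub_center_pow hn, smul_eq_mul]
  field_simp

end petalParam

lemma exists_homoclinic_of_eventuallyEq_pow_mul {F g : ℂ → ℂ} {a : ℂ} {n : ℕ} {U : Set ℂ}
    (hn : n ≠ 0) (hg : AnalyticAt ℂ g a) (hga : g a ≠ 0)
    (hF : ∀ᶠ z in 𝓝 a, F z = (z - a) ^ (n + 1) * g z) (hU : U ∈ 𝓝 a) :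
    ∃ γ : ℝ → ℂ, (∀ t, HasDerivAt γ (F (γ t)) t) ∧ (∀ t, γ t ∈ U \ {a}) ∧
      Tendsto γ (cobounded ℝ) (𝓝 a) := by
  obtain ⟨b, hb⟩ := IsAlgClosed.exists_pow_nat_eq (-Complex.I / (n * g a)) (Nat.pos_of_ne_zero hn)
  have hb0 : b ≠ 0 := by
    rintro rfl
    simp [hn, hga, eq_comm] at hb
  have hbI : -n * b ^ n * g a = Complex.I := by
    rw [hb]
    field_simp
  have hpetal : Tendsto (petalParam a b n) (cobounded ℂ ⊓ 𝓟 Complex.slitPlane) (𝓝 a) :=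
    (petalParam.tendsto_cobounded hn).mono_left inf_le_left
  have hslit : ∀ᶠ v in cobounded ℂ ⊓ 𝓟 Complex.slitPlane, v ∈ Complex.slitPlane :=
    mem_inf_of_right (mem_principal_self _)
  obtain ⟨v, hv, hvU, hvlim⟩ := exists_forall_hasDerivAt_of_tendsto_I
    (H := fun v ↦ -n * b ^ n * g (petalParam a b n v))
    (U := {v | v ∈ Complex.slitPlane ∧ petalParam a b n v ∈ U ∧
      F (petalParam a b n v) = (petalParam a b n v - a) ^ (n + 1) * g (petalParam a b n v)})
    (by
      filter_upwards [hslit, hpetal.eventually hg.eventually_analyticAt] with v hvs hgv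
      exact (hgv.differentiableAt.comp v (petalParam.hasDerivAt hvs).differentiableAt).const_mul _)
    (hbI ▸ (hg.continuousAt.tendsto.comp hpetal).const_mul _)
    (hslit.and ((hpetal.eventually hU).and (hpetal.eventually hF)))
  refine ⟨petalParam a b n ∘ v, fun t ↦ ?_, fun t ↦ ⟨(hvU t).2.1, ?_⟩,
    (petalParam.tendsto_cobounded hn).comp hvlim⟩
  · exact (petalParam.hasDerivAt_comp hn (hvU t).1 (hv t)).congr_deriv (hvU t).2.2.symm
  · exact petalParam.ne_center hb0 (Complex.slitPlane_ne_zero (hvU t).1)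

lemma exists_ne_of_tendsto_of_forall_ne_s11 {X Y : Type*} [TopologicalSpace Y] [T1Space Y]
    {l : Filter X} [l.NeBot] {f : X → Y} {y : Y} (hf : Tendsto f l (𝓝 y)) (hy : ∀ x, f x ≠ y) :
    ∃ x x', f x ≠ f x' := by
  obtain ⟨x₀⟩ := l.nonempty_of_neBot
  by_contra! hconst
  exact hy x₀ (tendsto_const_nhds_iff.mp (hf.congr fun x ↦ hconst x x₀))

theorem stmt_11_general {Ω : Set ℂ} {F : ℂ → ℂ} {a : ℂ} {m : ℕ} {ε : ℝ} (hΩ : Ω ∈ 𝓝 a)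
    (hF : AnalyticAt ℂ F a) (hm : 2 ≤ m) (hlow : ∀ k < m, iteratedDeriv k F a = 0)
    (hord : iteratedDeriv m F a ≠ 0) (hε : 0 < ε) :
    ∃ γ : ℝ → ℂ, IsSolOn F Ω univ γ ∧
      (∀ t : ℝ, γ t ≠ a ∧ dist (γ t) a < ε) ∧
      (∃ t s : ℝ, γ t ≠ γ s) ∧
      Tendsto γ atTop (𝓝 a) ∧ Tendsto γ atBot (𝓝 a) := by
  obtain ⟨g, hg, hga, hFg⟩ := hF.analyticOrderAt_eq_natCast.mp
    ((analyticOrderAt_eq_nat_iff_iteratedDeriv_eq_zero hF).mpr ⟨hlow, hord⟩)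
  obtain ⟨n, rfl⟩ : ∃ n, m = n + 1 := Nat.exists_eq_add_one.mpr (by lia)
  obtain ⟨γ, hγ, hγU, hlim⟩ := exists_homoclinic_of_eventuallyEq_pow_mul (by lia) hg hga hFg
    (inter_mem hΩ (ball_mem_nhds a hε))
  rw [IsOrderBornology.cobounded_eq, tendsto_sup] at hlim
  exact ⟨γ, fun t _ ↦ ⟨(hγU t).1.1, (hγ t).hasDerivWithinAt⟩, fun t ↦ ⟨(hγU t).2, (hγU t).1.2⟩,
    exists_ne_of_tendsto_of_forall_ne_s11 hlim.2 fun t ↦ (hγU t).2, hlim.2, hlim.1⟩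

/-- every closed `ε`-ball around an equilibrium `a` of order `m ≥ 2` of a
holomorphic flow that lies in `Ω` and contains no other zero of `F` contains a homoclinic
orbit of `a` inside the punctured ball. -/
theorem stmt_11 (Ω : Set ℂ) (hΩ : IsOpen Ω) (hconn : IsConnected Ω)
    (F : ℂ → ℂ) (hF : DifferentiableOn ℂ F Ω) (hF0 : ∃ z ∈ Ω, F z ≠ 0)
    (a : ℂ) (ha : a ∈ Ω) (m : ℕ) (hm : 2 ≤ m)
    (hlow : ∀ k < m, iteratedDeriv k F a = 0) (hord : iteratedDeriv m F a ≠ 0)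
    (ε : ℝ) (hε : 0 < ε) (hball : Metric.closedBall a ε ⊆ Ω)
    (honly : ∀ z ∈ Metric.closedBall a ε, F z = 0 → z = a) :
    ∃ γ : ℝ → ℂ, IsSolOn F Ω univ γ ∧
      (∀ t : ℝ, γ t ≠ a ∧ dist (γ t) a < ε) ∧
      (∃ t s : ℝ, γ t ≠ γ s) ∧
      Tendsto γ atTop (nhds a) ∧ Tendsto γ atBot (nhds a) := by
  exact stmt_11_general (hΩ.mem_nhds ha) (hF.analyticAt (hΩ.mem_nhds ha)) hm hlow hord hε
end
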